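/- Let N ≥ 1 and let G : ℝ^N → ℝ^N be continuous. Suppose there exists an invertible linear map B : ℝ^N → ℝ^N and constants b₁, b₂ > 0 with b₁‖X‖ ≤ ‖BX‖ ≤ b₂‖X‖ for all X, and a radius q > 0 such that ⟨G(X), BX⟩ > 0 whenever ‖X‖ ≥ q. Then there exists U ∈ ℝ^N with G(U) = 0. -/

import Mathlib

/-!
For a `C¹` map `k` vanishing on the frontier of a compact set `K`, the map `x ↦ x + t • k x` is,
for small `t`, a bijection of `K` onto itself with positive Jacobian, so
`∫ x in K, det (1 + t • fderiv ℝ k x)` is the volume of `K`. The integral is a polynomial in `t`,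
hence it is the volume of `K` for every `t`, in particular for `t = 1` (Milnor, Rogers). Were
`x ↦ x + k x` a retraction onto the frontier, its Jacobian would vanish and `K` would be a null set.
Smooth approximation turns this into the existence of zeros of continuous vector fields pointing
outwards on a sphere, and `X ↦ Bᵀ (G X)` is such a field.
-/

open Filter MeasureTheory Metric Module Polynomial Set Topology

theorem inter_frontier_nonempty_of_isPreconnected {X : Type*} [TopologicalSpace X] {s t : Set X}
    (ht : IsPreconnected t) (hs : (t ∩ s).Nonempty) (hsc : (t ∩ sᶜ).Nonempty) :
    (t ∩ frontier s).Nonempty := by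
  by_contra! hempty
  have hcover : t ⊆ interior s ∪ (closure s)ᶜ := fun x hx => by
    by_contra! h
    simp only [mem_union, mem_compl_iff, not_or, not_not] at h
    exact (hempty.subset ⟨hx, h.2, h.1⟩ : x ∈ (∅ : Set X))
  obtain ⟨x, hxt, hxs⟩ := hs
  obtain ⟨y, hyt, hys⟩ := hsc
  have hdisj : Disjoint (interior s) (closure s)ᶜ :=
    disjoint_compl_right_iff_subset.2 interior_subset_closure
  rcases ht.subset_or_subset isOpen_interior isClosed_closure.isOpen_compl hdisj hcover with h | h
  · exact hys (interior_subset (h hyt))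
  · exact h hxt (subset_closure hxs)

theorem lipschitzWith_indicator_of_eqOn_zero_frontier {E F : Type*} [NormedAddCommGroup E]
    [NormedSpace ℝ E] [NormedAddCommGroup F] {s : Set E} {k : E → F} {c : NNReal}
    (hs : IsClosed s) (hk : LipschitzOnWith c k s) (hk0 : EqOn k 0 (frontier s)) :
    LipschitzWith c (s.indicator k) := by
  have hcross : ∀ x ∈ s, ∀ y ∉ s, ‖k x‖ ≤ c * ‖x - y‖ := fun x hx y hy => by
    obtain ⟨z, hzseg, hzs⟩ := inter_frontier_nonempty_of_isPreconnected
      (convex_segment (𝕜 := ℝ) x y).isPreconnected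
      ⟨x, left_mem_segment ℝ x y, hx⟩ ⟨y, right_mem_segment ℝ x y, hy⟩
    calc ‖k x‖ = ‖k z - k x‖ := by rw [hk0 hzs, Pi.zero_apply, zero_sub, norm_neg]
      _ ≤ c * ‖z - x‖ := hk.norm_sub_le (hs.frontier_subset hzs) hx
      _ ≤ c * ‖x - y‖ := by
        rw [norm_sub_rev x y]
        gcongr
        exact norm_sub_le_of_mem_segment hzseg
  refine LipschitzWith.of_dist_le_mul fun x y => ?_
  rw [dist_eq_norm, dist_eq_norm]
  by_cases hx : x ∈ s <;> by_cases hy : y ∈ s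
  · simpa [hx, hy] using hk.norm_sub_le hx hy
  · simpa [hx, hy] using hcross x hx y hy
  · simpa [hx, hy, norm_sub_rev] using hcross y hy x hx
  · simp only [indicator_of_notMem hx, indicator_of_notMem hy, sub_self, norm_zero]
    positivity

theorem bijective_add_of_lipschitzWith {E : Type*} [NormedAddCommGroup E] [CompleteSpace E]
    {k : E → E} {c : NNReal} (hc : c < 1) (hk : LipschitzWith c k) :
    Function.Bijective fun x => x + k x := by
  constructor
  · exact (AntilipschitzWith.id.add_lipschitzWith hk (by simpa using hc)).injective
  · intro y
    have hcontr : ContractingWith c fun x => y - k x :=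
      ⟨hc, LipschitzWith.of_dist_le_mul fun x z => by
        simpa only [dist_sub_left] using hk.dist_le_mul x z⟩
    obtain ⟨x, hx, -⟩ := hcontr.exists_fixedPoint 0 (edist_ne_top _ _)
    exact ⟨x, (sub_eq_iff_eq_add.1 hx).symm⟩

theorem bijOn_add_of_lipschitzOnWith {E : Type*} [NormedAddCommGroup E] [NormedSpace ℝ E]
    [CompleteSpace E] {s : Set E} {k : E → E} {c : NNReal} (hs : IsClosed s) (hc : c < 1)
    (hk : LipschitzOnWith c k s) (hk0 : EqOn k 0 (frontier s)) :
    BijOn (fun x => x + k x) s s := by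
  set f : E → E := fun x => x + s.indicator k x with hf
  have hbij : Function.Bijective f :=
    bijective_add_of_lipschitzWith hc (lipschitzWith_indicator_of_eqOn_zero_frontier hs hk hk0)
  have hfs : EqOn f (fun x => x + k x) s := fun x hx => by simp [hf, hx]
  have hfsc : EqOn f id sᶜ := fun x hx => by simpa [hf] using fun h => absurd h hx
  have himage : f '' s = s := by
    rw [← compl_inj_iff, ← image_compl_eq hbij, hfsc.image_eq, image_id]
  exact hfs.bijOn_iff.1 ⟨mapsTo_iff_image_subset.2 himage.subset, hbij.injective.injOn,
    himage.superset⟩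

theorem exists_polynomial_eval_eq_det_smul_add {R M : Type*} [CommRing R] [Nontrivial R]
    [AddCommGroup M] [Module R M] [Module.Free R M] [Module.Finite R M] (A B : End R M) :
    ∃ p : R[X], p.natDegree ≤ finrank R M ∧ ∀ t, p.eval t = LinearMap.det (t • A + B) := by
  classical
  let b := Free.chooseBasis R M
  refine ⟨((X : R[X]) • (LinearMap.toMatrix b b A).map C + (LinearMap.toMatrix b b B).map C).det,
    (natDegree_det_X_add_C_le _ _).trans_eq (finrank_eq_card_chooseBasisIndex R M).symm,
    fun t => ?_⟩
  rw [← LinearMap.det_toMatrix b, map_add, map_smul, ← coe_evalRingHom, RingHom.map_det]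
  congr 1
  ext i j
  simp [mul_comm t]

theorem exists_polynomial_eval_eq_integral {α 𝕜 : Type*} [MeasurableSpace α] [RCLike 𝕜]
    {μ : Measure α} {n : ℕ} {p : α → 𝕜[X]} (hdeg : ∀ x, (p x).natDegree ≤ n)
    (hint : ∀ t, Integrable (fun x => (p x).eval t) μ) :
    ∃ q : 𝕜[X], ∀ t, q.eval t = ∫ x, (p x).eval t ∂μ := by
  let s := Finset.range (n + 1)
  let v : ℕ → 𝕜 := Nat.cast
  have hv : InjOn v s := Nat.cast_injective.injOn
  have hdeg_lt : ∀ x, (p x).degree < s.card := fun x => by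
    rw [Finset.card_range]
    exact degree_le_natDegree.trans_lt (by exact_mod_cast Nat.lt_succ_of_le (hdeg x))
  have heval : ∀ x t, (p x).eval t = ∑ i ∈ s, (p x).eval (v i) * (Lagrange.basis s v i).eval t :=
    fun x t => by
      nth_rewrite 1 [Lagrange.eq_interpolate hv (hdeg_lt x)]
      simp only [Lagrange.interpolate_apply, eval_finsetSum, eval_mul, eval_C]
  refine ⟨Lagrange.interpolate s v fun i => ∫ x, (p x).eval (v i) ∂μ, fun t => ?_⟩
  simp only [heval _ t, Lagrange.interpolate_apply, eval_finsetSum, eval_mul, eval_C]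
  rw [integral_finsetSum _ fun i _ => (hint (v i)).mul_const _]
  simp only [integral_mul_const]

section NullLagrangian

variable {E : Type*} [NormedAddCommGroup E] [NormedSpace ℝ E]

theorem continuous_det_smul_fderiv_add_one {k : E → E} (hk : ContDiff ℝ 1 k) :
    Continuous fun z : ℝ × E => (z.1 • fderiv ℝ k z.2 + 1).det :=
  ContinuousLinearMap.continuous_det.comp <|
    (continuous_fst.smul ((hk.continuous_fderiv one_ne_zero).comp continuous_snd)).add
      continuous_const

variable [FiniteDimensional ℝ E] [MeasurableSpace E] [BorelSpace E] (μ : Measure E)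
  [μ.IsAddHaarMeasure] {K : Set E}

theorem setIntegral_det_eq_measureReal_of_bijOn {f : E → E} {f' : E → E →L[ℝ] E}
    (hK : MeasurableSet K) (hf : BijOn f K K) (hf' : ∀ x ∈ K, HasFDerivWithinAt f (f' x) K x)
    (hdet : ∀ x ∈ K, 0 ≤ (f' x).det) : ∫ x in K, (f' x).det ∂μ = μ.real K :=
  calc ∫ x in K, (f' x).det ∂μ = ∫ x in K, |(f' x).det| • (1 : ℝ) ∂μ :=
        setIntegral_congr_fun hK fun x hx => by simp [abs_of_nonneg (hdet x hx)]
    _ = ∫ _ in f '' K, (1 : ℝ) ∂μ :=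
        (integral_image_eq_integral_abs_det_fderiv_smul μ hK hf' hf.injOn fun _ => 1).symm
    _ = μ.real K := by simp [hf.image_eq]

theorem eventually_setIntegral_det_smul_fderiv_add_one {k : E → E} (hK : IsCompact K)
    (hk : ContDiff ℝ 1 k) (hk0 : EqOn k 0 (frontier K)) :
    ∀ᶠ t : ℝ in 𝓝 0, ∫ x in K, (t • fderiv ℝ k x + 1).det ∂μ = μ.real K := by
  obtain ⟨C, hC⟩ := hk.locallyLipschitz.locallyLipschitzOn.exists_lipschitzOnWith_of_compact hK
  have hcontr : ∀ᶠ t : ℝ in 𝓝 0, ‖t‖₊ * C < 1 :=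
    (show Continuous fun t : ℝ => ‖t‖₊ * C by fun_prop).continuousAt.eventually_lt_const (by simp)
  have hdet : ∀ᶠ t : ℝ in 𝓝 0, ∀ x ∈ K, 0 < (t • fderiv ℝ k x + 1).det :=
    hK.eventually_forall_of_forall_eventually fun x _ =>
      (continuous_det_smul_fderiv_add_one hk).continuousAt.eventually_const_lt
        (by simp [ContinuousLinearMap.det])
  filter_upwards [hcontr, hdet] with t ht htdet
  have hbij : BijOn (fun x => x + t • k x) K K :=
    bijOn_add_of_lipschitzOnWith hK.isClosed ht ((lipschitzWith_smul t).comp_lipschitzOnWith hC)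
      fun x hx => by simp [hk0 hx]
  refine setIntegral_det_eq_measureReal_of_bijOn μ hK.measurableSet hbij (fun x _ => ?_)
    fun x hx => (htdet x hx).le
  have hderiv := (hk.differentiable one_ne_zero x).hasFDerivAt
  rw [add_comm]
  exact ((hasFDerivAt_id x).add (hderiv.const_smul t)).hasFDerivWithinAt

theorem setIntegral_det_fderiv_eq_measureReal {f : E → E} (hK : IsCompact K)
    (hf : ContDiff ℝ 1 f) (hid : EqOn f id (frontier K)) :
    ∫ x in K, (fderiv ℝ f x).det ∂μ = μ.real K := by
  set k : E → E := f - id with hk_def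
  have hk : ContDiff ℝ 1 k := hf.sub contDiff_id
  have hk0 : EqOn k 0 (frontier K) := fun x hx => sub_eq_zero.2 (hid hx)
  choose p hdeg hp using fun x => exists_polynomial_eval_eq_det_smul_add
    (fderiv ℝ k x : E →ₗ[ℝ] E) 1
  replace hp : ∀ x t, (p x).eval t = (t • fderiv ℝ k x + 1).det := hp
  obtain ⟨q, hq⟩ := exists_polynomial_eval_eq_integral (μ := μ.restrict K) hdeg fun t => by
    simp only [hp]
    exact ((continuous_det_smul_fderiv_add_one hk).comp (.prodMk_right t)).continuousOn
      |>.integrableOn_compact hK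
  have hq_const : q = C (μ.real K) := eq_of_infinite_eval_eq _ _ <| infinite_of_mem_nhds 0 <| by
    filter_upwards [eventually_setIntegral_det_smul_fderiv_add_one μ hK hk hk0] with t ht
    simpa only [mem_ofPred_eq, eval_C, hq, hp] using ht
  have hfderiv : ∀ x, fderiv ℝ f x = (1 : ℝ) • fderiv ℝ k x + 1 := fun x => by
    rw [one_smul, hk_def, fderiv_sub (hf.differentiable one_ne_zero x) differentiableAt_id,
      fderiv_id]
    exact (sub_add_cancel _ _).symm
  simp only [hfderiv, ← hp, ← hq, hq_const, eval_C]

end NullLagrangian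

theorem det_fderiv_eq_zero_of_eventually_mem {E : Type*} [NormedAddCommGroup E] [NormedSpace ℝ E]
    [FiniteDimensional ℝ E] {f : E → E} {s : Set E} {x : E} (hf : ContDiffAt ℝ 1 f x)
    (hfs : ∀ᶠ y in 𝓝 x, f y ∈ s) (hs : interior s = ∅) : (fderiv ℝ f x).det = 0 := by
  by_contra hdet
  have hsurj : (fderiv ℝ f x : E →ₗ[ℝ] E).range = ⊤ :=
    (LinearMap.isUnit_iff_range_eq_top _).1
      ((LinearMap.isUnit_iff_isUnit_det _).2 (isUnit_iff_ne_zero.2 hdet))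
  have hmap : map f (𝓝 x) = 𝓝 (f x) :=
    (hf.hasStrictFDerivAt one_ne_zero).map_nhds_eq_of_surj hsurj
  have hmem : f x ∈ interior s := mem_interior_iff_mem_nhds.2 (hmap ▸ hfs)
  exact (hs ▸ hmem : f x ∈ (∅ : Set E))

theorem interior_eq_empty_of_contDiff_retraction_frontier {E : Type*} [NormedAddCommGroup E]
    [NormedSpace ℝ E] [FiniteDimensional ℝ E] {K : Set E} {f : E → E} (hK : IsCompact K)
    (hf : ContDiff ℝ 1 f) (hfK : ∀ x, f x ∈ frontier K) (hid : EqOn f id (frontier K)) :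
    interior K = ∅ := by
  borelize E
  have hdet : ∀ x, (fderiv ℝ f x).det = 0 := fun x =>
    det_fderiv_eq_zero_of_eventually_mem hf.contDiffAt (.of_forall hfK)
      (interior_frontier hK.isClosed)
  have hvol : (Measure.addHaar : Measure E).real K = 0 := by
    simpa only [hdet, integral_zero] using
      (setIntegral_det_fderiv_eq_measureReal Measure.addHaar hK hf hid).symm
  exact Measure.interior_eq_empty_of_null <|
    (measureReal_eq_zero_iff hK.measure_lt_top.ne).1 hvol

section RadialProj

variable {E : Type*} [NormedAddCommGroup E] [NormedSpace ℝ E] {R : ℝ}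

/-- The radial projection onto the closed ball of radius `R` centred at the origin, used to extend
vector fields from the ball to the whole space: it fixes the ball and moves every other point along
its ray to the sphere. Meaningful only for `0 < R`. -/
noncomputable def radialProj (R : ℝ) (x : E) : E := (R / max R ‖x‖) • x

theorem continuous_radialProj (hR : 0 < R) : Continuous (radialProj R : E → E) :=
  (continuous_const.div (continuous_const.max continuous_norm) fun _ =>
    (lt_max_of_lt_left hR).ne').smul continuous_id

theorem radialProj_of_norm_le (hR : 0 < R) {x : E} (hx : ‖x‖ ≤ R) : radialProj R x = x := by
  rw [radialProj, max_eq_left hx, div_self hR.ne', one_smul]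

theorem norm_smul_radialProj (hR : 0 < R) {x : E} (hx : R ≤ ‖x‖) :
    (‖x‖ / R) • radialProj R x = x := by
  have hx0 : ‖x‖ ≠ 0 := (hR.trans_le hx).ne'
  rw [radialProj, max_eq_right hx, smul_smul, div_mul_div_cancel₀ hR.ne', div_self hx0, one_smul]

theorem norm_radialProj (hR : 0 < R) {x : E} (hx : R ≤ ‖x‖) : ‖radialProj R x‖ = R := by
  have hx0 : ‖x‖ ≠ 0 := (hR.trans_le hx).ne'
  rw [radialProj, max_eq_right hx, norm_smul, norm_div, norm_norm, Real.norm_of_nonneg hR.le,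
    div_mul_cancel₀ _ hx0]

theorem norm_radialProj_le (hR : 0 < R) (x : E) : ‖radialProj R x‖ ≤ R := by
  rcases le_total ‖x‖ R with hx | hx
  · rwa [radialProj_of_norm_le hR hx]
  · exact (norm_radialProj hR hx).le

theorem norm_sub_le_norm_sub_radialProj (hR : 0 < R) (x : E) : ‖x‖ - R ≤ ‖x - radialProj R x‖ :=
  (sub_le_sub_left (norm_radialProj_le hR x) _).trans (norm_sub_norm_le _ _)

end RadialProj

section Zeros

variable {E : Type*} [NormedAddCommGroup E] [InnerProductSpace ℝ E] [FiniteDimensional ℝ E]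

theorem exists_eq_zero_of_contDiff_of_eqOn_sphere {g : E → E} {R : ℝ} (hR : 0 < R)
    (hg : ContDiff ℝ 1 g) (hid : EqOn g id (sphere 0 R)) : ∃ x, g x = 0 := by
  by_contra! hne
  have hfrontier : frontier (closedBall (0 : E) R) = sphere 0 R := frontier_closedBall _ hR.ne'
  have hempty : interior (closedBall (0 : E) R) = ∅ :=
    interior_eq_empty_of_contDiff_retraction_frontier (f := fun x => (R / ‖g x‖) • g x)
      (isCompact_closedBall 0 R)
      ((contDiff_const.div (hg.norm ℝ hne) fun x => norm_ne_zero_iff.2 (hne x)).smul hg)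
      (fun x => by
        rw [hfrontier, mem_sphere_zero_iff_norm, norm_smul, norm_div, norm_norm,
          Real.norm_of_nonneg hR.le, div_mul_cancel₀ _ (norm_ne_zero_iff.2 (hne x))])
      (hfrontier ▸ fun x hx => by
        simp only [hid hx, id_eq, mem_sphere_zero_iff_norm.1 hx, div_self hR.ne', one_smul])
  exact hempty.subset (ball_subset_interior_closedBall (mem_ball_self hR))

theorem exists_eq_zero_of_eventuallyEq_id {f : E → E} (hf : Continuous f)
    (hid : f =ᶠ[cocompact E] id) : ∃ x, f x = 0 := by
  by_contra! hne
  obtain ⟨r, hr⟩ : ∃ r, ∀ x, r < ‖x‖ → f x = x := by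
    obtain ⟨r, hr⟩ := closedBall_compl_subset_of_mem_cocompact hid 0
    exact ⟨r, fun x hx => hr (by simpa using hx)⟩
  set R := max r 0 + 1
  have hrR : r < R := (le_max_left r 0).trans_lt (lt_add_one _)
  have hR : 0 < R := (le_max_right r 0).trans_lt (lt_add_one _)
  obtain ⟨g, hg, hgf, hgid, -⟩ := hf.exists_contDiff_approx_and_eqOn 1 hf.norm
    (fun x => norm_pos_iff.2 (hne x)) isClosed_sphere
    ((isOpen_lt continuous_const continuous_norm).mem_nhdsSet.2 fun x hx =>
      hrR.trans_eq (mem_sphere_zero_iff_norm.1 hx).symm)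
    (contDiffOn_id.congr hr)
  obtain ⟨x, hx⟩ := exists_eq_zero_of_contDiff_of_eqOn_sphere hR hg fun x hx =>
    (hgid hx).trans (hr x (hrR.trans_eq (mem_sphere_zero_iff_norm.1 hx).symm))
  simpa [hx] using hgf x

theorem exists_continuous_extension_eventuallyEq_id {H : E → E} {R : ℝ} (hR : 0 < R)
    (hH : ContinuousOn H (closedBall 0 R)) (hpos : ∀ x, ‖x‖ = R → 0 ≤ inner ℝ (H x) x) :
    ∃ f : E → E, Continuous f ∧ EqOn f H (closedBall 0 R) ∧ f =ᶠ[cocompact E] id ∧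
      ∀ x, R < ‖x‖ → 0 < inner ℝ (f x) x := by
  have hP : Continuous (radialProj R : E → E) := continuous_radialProj hR
  have hHP : Continuous fun x => H (radialProj R x) :=
    hH.comp_continuous hP fun x => mem_closedBall_zero_iff.2 (norm_radialProj_le hR x)
  let σ : E → ℝ := fun x => min 1 ‖x - radialProj R x‖
  have hσ : Continuous σ := by fun_prop
  refine ⟨fun x => (1 - σ x) • H (radialProj R x) + σ x • x,
    ((continuous_const.sub hσ).smul hHP).add (hσ.smul continuous_id), fun x hx => ?_, ?_,
    fun x hx => ?_⟩
  · have hPx : radialProj R x = x := radialProj_of_norm_le hR (mem_closedBall_zero_iff.1 hx)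
    have hσx : σ x = 0 := by simp [σ, hPx]
    simp only [hσx, hPx, sub_zero, one_smul, zero_smul, add_zero]
  · filter_upwards [(tendsto_norm_cocompact_atTop (E := E)).eventually_ge_atTop (R + 1)] with x hx
    have hσx : σ x = 1 := min_eq_left (by linarith [norm_sub_le_norm_sub_radialProj hR x])
    simp only [hσx, sub_self, zero_smul, one_smul, zero_add, id_eq]
  · have hx0 : 0 < ‖x‖ := hR.trans hx
    have hσ_le : σ x ≤ 1 := min_le_left _ _
    have hσ_pos : 0 < σ x := lt_min one_pos (by linarith [norm_sub_le_norm_sub_radialProj hR x])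
    have hHx : 0 ≤ inner ℝ (H (radialProj R x)) x :=
      calc 0 ≤ ‖x‖ / R * inner ℝ (H (radialProj R x)) (radialProj R x) :=
            mul_nonneg (by positivity) (hpos _ (norm_radialProj hR hx.le))
        _ = inner ℝ (H (radialProj R x)) x := by
            rw [← real_inner_smul_right, norm_smul_radialProj hR hx.le]
    calc 0 < (1 - σ x) * inner ℝ (H (radialProj R x)) x + σ x * ‖x‖ ^ 2 :=
          add_pos_of_nonneg_of_pos (mul_nonneg (sub_nonneg.2 hσ_le) hHx) (by positivity)
      _ = inner ℝ ((1 - σ x) • H (radialProj R x) + σ x • x) x := by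
          rw [inner_add_left, real_inner_smul_left, real_inner_smul_left,
            real_inner_self_eq_norm_sq]

theorem exists_mem_closedBall_eq_zero_of_inner_nonneg {H : E → E} {R : ℝ} (hR : 0 < R)
    (hH : ContinuousOn H (closedBall 0 R)) (hpos : ∀ x, ‖x‖ = R → 0 ≤ inner ℝ (H x) x) :
    ∃ x ∈ closedBall 0 R, H x = 0 := by
  obtain ⟨f, hf, hfH, hf_id, hf_out⟩ := exists_continuous_extension_eventuallyEq_id hR hH hpos
  obtain ⟨x, hx⟩ := exists_eq_zero_of_eventuallyEq_id hf hf_id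
  have hxR : x ∈ closedBall 0 R := by
    rw [mem_closedBall_zero_iff]
    by_contra! h
    simpa [hx] using hf_out x h
  exact ⟨x, hxR, (hfH hxR).symm.trans hx⟩

end Zeros

theorem stmt12_general {E F : Type*} [NormedAddCommGroup E] [InnerProductSpace ℝ E]
    [FiniteDimensional ℝ E] [NormedAddCommGroup F] [InnerProductSpace ℝ F] {G : E → F}
    {B : E →ₗ[ℝ] F} (hB : Function.Surjective B) {q : ℝ} (hq : 0 < q)
    (hG : ContinuousOn G (closedBall 0 q)) (hpos : ∀ X, ‖X‖ = q → 0 ≤ inner ℝ (G X) (B X)) :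
    ∃ U ∈ closedBall 0 q, G U = 0 := by
  have : FiniteDimensional ℝ F := Module.Finite.of_surjective B hB
  obtain ⟨U, hUq, hU⟩ := exists_mem_closedBall_eq_zero_of_inner_nonneg hq
    (B.adjoint.continuous_of_finiteDimensional.comp_continuousOn hG)
    fun X hX => (hpos X hX).trans_eq (B.adjoint_inner_left X (G X)).symm
  obtain ⟨X, hX⟩ := hB (G U)
  refine ⟨U, hUq, inner_self_eq_zero (𝕜 := ℝ) |>.1 ?_⟩
  calc inner ℝ (G U) (G U) = inner ℝ (B.adjoint (G U)) X := by rw [B.adjoint_inner_left, hX]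
    _ = 0 := by rw [show B.adjoint (G U) = 0 from hU, inner_zero_left]

theorem stmt12 (N : ℕ) (hN : 1 ≤ N)
    (G : EuclideanSpace ℝ (Fin N) → EuclideanSpace ℝ (Fin N)) (hG : Continuous G)
    (B : EuclideanSpace ℝ (Fin N) ≃ₗ[ℝ] EuclideanSpace ℝ (Fin N))
    (b₁ b₂ : ℝ) (hb₁ : 0 < b₁) (hb₂ : 0 < b₂)
    (hB : ∀ X, b₁ * ‖X‖ ≤ ‖B X‖ ∧ ‖B X‖ ≤ b₂ * ‖X‖)
    (q : ℝ) (hq : 0 < q)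
    (hpos : ∀ X, q ≤ ‖X‖ → 0 < inner (G X) (B X) (𝕜 := ℝ)) :
    ∃ U, G U = 0 := by
  obtain ⟨U, -, hU⟩ := stmt12_general (B := B.toLinearMap) B.surjective hq hG.continuousOn
    fun X hX => (hpos X hX.ge).le
  exact ⟨U, hU⟩
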